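/- Let n ≥ 1 and δ ∈ (0, n]. Suppose f ∈ nL¹(ℝⁿ, H̃^δ_∞) is nonnegative and is an nL¹-limit of continuous functions. Then f(x) = limsup_{r→0⁺} (1/H̃^δ_∞(B(x,r))) ∫_{B(x,r)} f(y) dH̃^δ_∞(y) for H̃^δ_∞-almost every x ∈ ℝⁿ. -/

import Mathlib

open MeasureTheory Set Metric Filter Topology
open scoped ENNReal

noncomputable section

/-- Euclidean space `ℝⁿ`. -/
abbrev En (n : ℕ) : Type := EuclideanSpace ℝ (Fin n)

/-- The half-open dyadic cube `2^k (m + [0,1)ⁿ)`, `k : ℤ`, `m : ℤⁿ`. -/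
def dyadicCube (n : ℕ) (k : ℤ) (m : Fin n → ℤ) : Set (En n) :=
  {x | ∀ i, (m i : ℝ) * 2 ^ k ≤ x i ∧ x i < ((m i : ℝ) + 1) * 2 ^ k}

/-- The `δ`-dimensional dyadic Hausdorff content `H̃^δ_∞`: the infimum of `Σ ℓ(Q_i)^δ`
over all countable collections of dyadic cubes whose union's interior covers `E`. -/
def dyadicContent (n : ℕ) (δ : ℝ) (E : Set (En n)) : ℝ≥0∞ :=
  ⨅ (c : ℕ → ℤ × (Fin n → ℤ))
    (_ : E ⊆ interior (⋃ i, dyadicCube n (c i).1 (c i).2)),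
    ∑' i, ENNReal.ofReal (((2 : ℝ) ^ (c i).1) ^ δ)

/-- The Choquet integral `∫_Ω f dH̃^δ_∞ := ∫_0^∞ H̃^δ_∞({x ∈ Ω : f x > t}) dt`
of a `[0,∞]`-valued function over `Ω ⊆ ℝⁿ`. -/
def choquetIntegral (n : ℕ) (δ : ℝ) (Ω : Set (En n)) (f : En n → ℝ≥0∞) : ℝ≥0∞ :=
  ∫⁻ t in Ioi (0 : ℝ), dyadicContent n δ {x | x ∈ Ω ∧ ENNReal.ofReal t < f x}

/-- The Choquet integral `∫_Ω |f| dH̃^δ_∞` of a real-valued function. -/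
def choquetIntegralAbs (n : ℕ) (δ : ℝ) (Ω : Set (En n)) (f : En n → ℝ) : ℝ≥0∞ :=
  choquetIntegral n δ Ω (fun x => ENNReal.ofReal |f x|)

/-- The Choquet integral `∫_Ω |f| dH̃^δ_∞` of an extended-real-valued function. -/
def choquetIntegralEAbs (n : ℕ) (δ : ℝ) (Ω : Set (En n)) (f : En n → EReal) : ℝ≥0∞ :=
  choquetIntegral n δ Ω (fun x => (f x).abs)

/-- The ball average `f^δ_{B(x,r)} := (1/H̃^δ_∞(B(x,r))) ∫_{B(x,r)} f dH̃^δ_∞`. -/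
def ballAvg (n : ℕ) (δ : ℝ) (f : En n → ℝ≥0∞) (x : En n) (r : ℝ) : ℝ≥0∞ :=
  choquetIntegral n δ (ball x r) f / dyadicContent n δ (ball x r)

/-- The Hausdorff-content centred maximal function `M^δ f(x)`. -/
def maximal (n : ℕ) (δ : ℝ) (f : En n → ℝ≥0∞) (x : En n) : ℝ≥0∞ :=
  ⨆ (r : ℝ) (_ : 0 < r), ballAvg n δ f x r

/-- `f^δ_*(x) := limsup_{r→0⁺} (1/H̃^δ_∞(B(x,r))) ∫_{B(x,r)} |f(y) − f(x)| dH̃^δ_∞(y)`. -/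
def lebDev (n : ℕ) (δ : ℝ) (f : En n → ℝ) (x : En n) : ℝ≥0∞ :=
  limsup (fun r : ℝ => choquetIntegralAbs n δ (ball x r) (fun y => f y - f x) /
    dyadicContent n δ (ball x r)) (𝓝[>] (0 : ℝ))

/-- `limsup_{r→0⁺} f^δ_{B(x,r)}` of the ball averages. -/
def limsupAvg (n : ℕ) (δ : ℝ) (f : En n → ℝ≥0∞) (x : En n) : ℝ≥0∞ :=
  limsup (fun r : ℝ => ballAvg n δ f x r) (𝓝[>] (0 : ℝ))

/-!
As for the classical differentiation theorem, the claim follows from a weak-type `(1,1)` inequality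
for the centred maximal operator and density of continuous functions.

Without strong subadditivity of the content, the Choquet integral is only sublinear up to constants.
From `f ≤ g + h` one still gets `∫ f ≤ a ∫ g + b ∫ h` for all conjugate exponents `a`, `b`. The
constants do not matter when `|f - f x|` is shown to have vanishing averages at almost every `x`;
letting `a → 1` then gives convergence of the averages of `|f|` to `|f x|`.

For the weak-type inequality, a ball with large average meets a dyadic cube of comparable size
with large average. Among the maximal such cubes take a maximal subfamily `S` that satisfies
`∑_{Q ∈ S, Q ⊆ P} ℓ(Q)^δ ≤ 2 ℓ(P)^δ` for all dyadic cubes `P`. The integrals over the cubes of `S`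
add up to at most a constant times the whole integral. Each of the maximal cubes lies in a dyadic
cube `P` with `ℓ(P)^δ ≤ ∑_{Q ∈ S, Q ⊆ P} ℓ(Q)^δ`, so that `∑_{Q ∈ S} ℓ(Q)^δ` controls the content of
the superlevel set of the maximal function.
-/

open scoped NNReal

section ChoquetIntegral

variable {α : Type*} (μ : OuterMeasure α)

/-- The Choquet integral `∫_s f dμ` with respect to an arbitrary outer measure; `choquetIntegral`
is the case of the dyadic Hausdorff content. -/
def outerChoquet (s : Set α) (f : α → ℝ≥0∞) : ℝ≥0∞ :=
  ∫⁻ t in Ioi (0 : ℝ), μ {x | x ∈ s ∧ ENNReal.ofReal t < f x}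

/-- The Choquet average `μ(s)⁻¹ ∫_s f dμ`; `ballAvg` is the case of a ball and the dyadic Hausdorff
content. -/
def choquetAverage (s : Set α) (f : α → ℝ≥0∞) : ℝ≥0∞ :=
  outerChoquet μ s f / μ s

lemma antitone_measure_superlevel (s : Set α) (f : α → ℝ≥0∞) :
    Antitone fun t : ℝ => μ {x | x ∈ s ∧ ENNReal.ofReal t < f x} :=
  fun _ _ htu => measure_mono fun _ hx => ⟨hx.1, (ENNReal.ofReal_le_ofReal htu).trans_lt hx.2⟩

lemma measurable_measure_superlevel (s : Set α) (f : α → ℝ≥0∞) :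
    Measurable fun t : ℝ => μ {x | x ∈ s ∧ ENNReal.ofReal t < f x} :=
  (antitone_measure_superlevel μ s f).measurable

variable {μ} {s : Set α} {f g h : α → ℝ≥0∞}

lemma outerChoquet_mono {t : Set α} (hst : s ⊆ t) (hfg : ∀ x ∈ s, f x ≤ g x) :
    outerChoquet μ s f ≤ outerChoquet μ t g :=
  lintegral_mono fun _ => measure_mono fun x hx => ⟨hst hx.1, hx.2.trans_le (hfg x hx.1)⟩

@[simp]
lemma outerChoquet_empty : outerChoquet μ ∅ f = 0 := by
  simp [outerChoquet]

lemma volume_Ioi_inter_ofReal_lt (c : ℝ≥0∞) :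
    volume (Ioi (0 : ℝ) ∩ {t | ENNReal.ofReal t < c}) = c := by
  rcases eq_or_ne c ⊤ with rfl | hc
  · simp
  · have : Ioi (0 : ℝ) ∩ {t | ENNReal.ofReal t < c} = Ioo 0 c.toReal := by
      ext t
      exact and_congr_right fun ht => ENNReal.ofReal_lt_iff_lt_toReal (le_of_lt ht) hc
    rw [this, Real.volume_Ioo, sub_zero, ENNReal.ofReal_toReal hc]

lemma outerChoquet_const (c : ℝ≥0∞) : outerChoquet μ s (fun _ => c) = c * μ s := by
  have hmeas : MeasurableSet {t : ℝ | ENNReal.ofReal t < c} :=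
    measurableSet_lt ENNReal.measurable_ofReal measurable_const
  have hlevel (t : ℝ) : μ {x | x ∈ s ∧ ENNReal.ofReal t < c} =
      {t : ℝ | ENNReal.ofReal t < c}.indicator (fun _ => μ s) t := by
    by_cases ht : ENNReal.ofReal t < c <;> simp [ht]
  simp only [outerChoquet, hlevel]
  rw [setLIntegral_indicator hmeas, setLIntegral_const, inter_comm, volume_Ioi_inter_ofReal_lt,
    mul_comm]

lemma mul_measure_superlevel_le_outerChoquet (c : ℝ≥0∞) :
    c * μ {x | x ∈ s ∧ c < f x} ≤ outerChoquet μ s f :=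
  outerChoquet_const (μ := μ) c ▸ outerChoquet_mono (fun _ hx => hx.1) fun _ hx => hx.2.le

lemma setLIntegral_Ioi_comp_inv_mul {a : ℝ} (ha : 0 < a) (F : ℝ → ℝ≥0∞) :
    ∫⁻ t in Ioi 0, F (a⁻¹ * t) = ENNReal.ofReal a * ∫⁻ t in Ioi 0, F t := by
  have hsubst := lintegral_image_eq_lintegral_abs_deriv_mul (s := Ioi (0 : ℝ)) measurableSet_Ioi
    (fun t _ => ((hasDerivAt_id t).const_mul a).hasDerivWithinAt)
    (mul_right_injective₀ ha.ne').injOn (fun t => F (a⁻¹ * t))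
  simp only [id_eq, mul_one, image_const_mul_Ioi_zero ha, abs_of_pos ha,
    inv_mul_cancel_left₀ ha.ne'] at hsubst
  rw [hsubst, lintegral_const_mul' _ _ ENNReal.ofReal_ne_top]

lemma outerChoquet_const_mul (a : ℝ≥0) :
    outerChoquet μ s (fun x => a * f x) = a * outerChoquet μ s f := by
  rcases eq_or_ne a 0 with rfl | ha
  · simpa using outerChoquet_const (μ := μ) (s := s) 0
  have ha' : (0 : ℝ) < a := by positivity
  have hlevel (t : ℝ) : {x | x ∈ s ∧ ENNReal.ofReal t < a * f x} =
      {x | x ∈ s ∧ ENNReal.ofReal ((a : ℝ)⁻¹ * t) < f x} := by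
    ext x
    rw [mem_ofPred_eq, mem_ofPred_eq, ENNReal.ofReal_mul (by positivity),
      ENNReal.ofReal_inv_of_pos ha', ENNReal.ofReal_coe_nnreal, mul_comm _ (ENNReal.ofReal t),
      ← div_eq_mul_inv, ENNReal.div_lt_iff (by simp [ha]) (by simp), mul_comm (f x)]
  simp only [outerChoquet, hlevel]
  rw [setLIntegral_Ioi_comp_inv_mul ha' fun t => μ {x | x ∈ s ∧ ENNReal.ofReal t < f x},
    ENNReal.ofReal_coe_nnreal]

lemma outerChoquet_sup_le :
    outerChoquet μ s (f ⊔ g) ≤ outerChoquet μ s f + outerChoquet μ s g := by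
  simp only [outerChoquet]
  rw [← lintegral_add_left (measurable_measure_superlevel μ s f)]
  refine lintegral_mono fun t => (measure_mono ?_).trans (measure_union_le _ _)
  rintro x ⟨hxs, hx⟩
  exact (lt_sup_iff.1 hx).imp (⟨hxs, ·⟩) (⟨hxs, ·⟩)

lemma add_le_sup_mul_of_holderConjugate {a b : ℝ≥0} (hab : a.HolderConjugate b) (x y : ℝ≥0∞) :
    x + y ≤ a * x ⊔ b * y := by
  have ha : (a : ℝ≥0∞) ≠ 0 := by exact_mod_cast hab.ne_zero
  have hb : (b : ℝ≥0∞) ≠ 0 := by exact_mod_cast hab.symm.ne_zero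
  have hsum : (a : ℝ≥0∞)⁻¹ + (b : ℝ≥0∞)⁻¹ = 1 := by
    simpa only [ENNReal.coe_inv, hab.ne_zero, hab.symm.ne_zero, ne_eq, not_false_eq_true]
      using hab.inv_add_inv_ennreal
  calc x + y = (a : ℝ≥0∞)⁻¹ * (a * x) + (b : ℝ≥0∞)⁻¹ * (b * y) := by
        rw [ENNReal.inv_mul_cancel_left ha (by simp), ENNReal.inv_mul_cancel_left hb (by simp)]
    _ ≤ (a : ℝ≥0∞)⁻¹ * (a * x ⊔ b * y) + (b : ℝ≥0∞)⁻¹ * (a * x ⊔ b * y) := by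
        gcongr <;> simp
    _ = a * x ⊔ b * y := by rw [← add_mul, hsum, one_mul]

-- An outer measure need not be strongly subadditive, so this integral need not be sublinear; the
-- pair of conjugate exponents is a substitute in which one constant can be taken close to `1`.
lemma outerChoquet_le_add {a b : ℝ≥0} (hab : a.HolderConjugate b)
    (hf : ∀ x ∈ s, f x ≤ g x + h x) :
    outerChoquet μ s f ≤ a * outerChoquet μ s g + b * outerChoquet μ s h := by
  rw [← outerChoquet_const_mul, ← outerChoquet_const_mul]
  exact (outerChoquet_mono subset_rfl fun x hx =>
    (hf x hx).trans (add_le_sup_mul_of_holderConjugate hab _ _)).trans outerChoquet_sup_le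

lemma outerChoquet_le_sum_of_subset_biUnion {ι : Type*} {I : Finset ι} {t : ι → Set α}
    (hst : s ⊆ ⋃ i ∈ I, t i) : outerChoquet μ s f ≤ ∑ i ∈ I, outerChoquet μ (t i) f := by
  simp only [outerChoquet]
  rw [← lintegral_finsetSum _ fun i _ => measurable_measure_superlevel μ (t i) f]
  refine lintegral_mono fun u => (measure_mono ?_).trans (measure_biUnion_finset_le I _)
  rintro x ⟨hxs, hx⟩
  obtain ⟨i, hi, hxi⟩ := mem_iUnion₂.1 (hst hxs)
  exact mem_iUnion₂.2 ⟨i, hi, hxi, hx⟩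

lemma choquetAverage_const_le (c : ℝ≥0∞) : choquetAverage μ s (fun _ => c) ≤ c := by
  rw [choquetAverage, outerChoquet_const]
  exact ENNReal.div_le_of_le_mul le_rfl

lemma choquetAverage_const (hs : μ s ≠ 0) (hs' : μ s ≠ ⊤) (c : ℝ≥0∞) :
    choquetAverage μ s (fun _ => c) = c := by
  rw [choquetAverage, outerChoquet_const, ENNReal.mul_div_cancel_right hs hs']

lemma choquetAverage_le_add {a b : ℝ≥0} (hab : a.HolderConjugate b)
    (hf : ∀ x ∈ s, f x ≤ g x + h x) :
    choquetAverage μ s f ≤ a * choquetAverage μ s g + b * choquetAverage μ s h := by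
  simp only [choquetAverage, ← mul_div_assoc, ← ENNReal.add_div]
  exact ENNReal.div_le_div_right (outerChoquet_le_add hab hf) _

end ChoquetIntegral

section LebesguePoint

variable {X F : Type*} [PseudoMetricSpace X] [NormedAddCommGroup F] {μ : OuterMeasure X}
  {f φ : X → F} {x : X}

/-- The weak-type `(1,1)` inequality, with constant `C`, for the centred maximal operator of the
Choquet averages over balls. -/
def WeakTypeMaximal (μ : OuterMeasure X) (C : ℝ≥0∞) : Prop :=
  ∀ (g : X → ℝ≥0∞) (q : ℝ≥0),
    q * μ {x | ∃ r > 0, q < choquetAverage μ (ball x r) g} ≤ C * outerChoquet μ univ g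

lemma eventually_choquetAverage_enorm_sub_le {q : ℝ≥0∞} (hq : 0 < q) (hφ : ContinuousAt φ x)
    (hx : ‖f x - φ x‖ₑ ≤ q)
    (havg : ∀ r > 0, choquetAverage μ (ball x r) (fun y => ‖f y - φ y‖ₑ) ≤ q) :
    ∀ᶠ r in 𝓝[>] 0, choquetAverage μ (ball x r) (fun y => ‖f y - f x‖ₑ) ≤ 6 * q := by
  have hcont : ∀ᶠ y in 𝓝 x, ‖φ y - φ x‖ₑ < q := by
    have : Tendsto (fun y => ‖φ y - φ x‖ₑ) (𝓝 x) (𝓝 0) := by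
      simpa using (hφ.tendsto.sub_const (φ x)).enorm
    exact this.eventually_lt_const hq
  obtain ⟨ε, hε, hball⟩ := Metric.eventually_nhds_iff_ball.1 hcont
  filter_upwards [Ioo_mem_nhdsGT hε] with r hr
  have hdev : ∀ y ∈ ball x r, ‖f y - f x‖ₑ ≤ ‖f y - φ y‖ₑ + 2 * q := fun y hy =>
    calc ‖f y - f x‖ₑ = ‖(f y - φ y) + ((φ y - φ x) - (f x - φ x))‖ₑ := by congr 1; abel
      _ ≤ ‖f y - φ y‖ₑ + (‖φ y - φ x‖ₑ + ‖f x - φ x‖ₑ) :=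
        (enorm_add_le _ _).trans (by gcongr; exact enorm_sub_le)
      _ ≤ ‖f y - φ y‖ₑ + 2 * q := by
        rw [two_mul]
        gcongr
        exact (hball y (ball_subset_ball hr.2.le hy)).le
  calc choquetAverage μ (ball x r) (fun y => ‖f y - f x‖ₑ)
      ≤ (2 : ℝ≥0) * choquetAverage μ (ball x r) (fun y => ‖f y - φ y‖ₑ) +
          (2 : ℝ≥0) * choquetAverage μ (ball x r) (fun _ => 2 * q) :=
        choquetAverage_le_add .two_two hdev
    _ ≤ (2 : ℝ≥0) * q + (2 : ℝ≥0) * (2 * q) := by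
        gcongr
        exacts [havg r hr.1, choquetAverage_const_le _]
    _ = 6 * q := by push_cast; ring

lemma mul_measure_not_eventually_le {C : ℝ≥0∞} (hC : WeakTypeMaximal μ C) (hφ : Continuous φ)
    {q : ℝ≥0} (hq : 0 < q) :
    q * μ {x | ¬ ∀ᶠ r in 𝓝[>] 0, choquetAverage μ (ball x r) (fun y => ‖f y - f x‖ₑ) ≤ 6 * q} ≤
      (1 + C) * outerChoquet μ univ fun y => ‖f y - φ y‖ₑ := by
  have hsub : {x | ¬ ∀ᶠ r in 𝓝[>] 0,
        choquetAverage μ (ball x r) (fun y => ‖f y - f x‖ₑ) ≤ 6 * q} ⊆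
      {x | x ∈ univ ∧ (q : ℝ≥0∞) < ‖f x - φ x‖ₑ} ∪
        {x | ∃ r > 0, q < choquetAverage μ (ball x r) fun y => ‖f y - φ y‖ₑ} := by
    intro x hx
    by_contra! hx'
    simp only [mem_union, mem_ofPred_eq, mem_univ, true_and, not_or, not_exists, not_and,
      not_lt] at hx'
    exact hx (eventually_choquetAverage_enorm_sub_le (by exact_mod_cast hq) hφ.continuousAt
      hx'.1 hx'.2)
  calc _ ≤ q * (μ _ + μ _) := by gcongr; exact (measure_mono hsub).trans (measure_union_le _ _)
    _ ≤ (1 + C) * outerChoquet μ univ fun y => ‖f y - φ y‖ₑ := by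
      rw [mul_add, add_mul, one_mul]
      exact add_le_add (mul_measure_superlevel_le_outerChoquet _) (hC _ _)

theorem ae_tendsto_choquetAverage_enorm_sub {C : ℝ≥0∞} (hC : WeakTypeMaximal μ C) (hC' : C ≠ ⊤)
    {φ : ℕ → X → F} (hφ : ∀ i, Continuous (φ i))
    (hlim : Tendsto (fun i => outerChoquet μ univ fun y => ‖f y - φ i y‖ₑ) atTop (𝓝 0)) :
    ∀ᵐ x ∂μ, Tendsto (fun r => choquetAverage μ (ball x r) fun y => ‖f y - f x‖ₑ)
      (𝓝[>] 0) (𝓝 0) := by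
  have hlevel (q : ℝ≥0) (hq : 0 < q) : ∀ᵐ x ∂μ, ∀ᶠ r in 𝓝[>] 0,
      choquetAverage μ (ball x r) (fun y => ‖f y - f x‖ₑ) ≤ 6 * q := by
    have hlim' := ENNReal.Tendsto.const_mul (a := 1 + C) hlim (.inr (by finiteness))
    rw [mul_zero] at hlim'
    have hnull := le_of_tendsto_of_tendsto' tendsto_const_nhds hlim' fun i =>
      mul_measure_not_eventually_le hC (hφ i) hq
    exact (mul_eq_zero.1 (nonpos_iff_eq_zero.1 hnull)).resolve_left (by simpa using hq.ne')
  obtain ⟨u, -, hu, hu0⟩ := exists_seq_strictAnti_tendsto (0 : ℝ≥0)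
  filter_upwards [ae_all_iff.2 fun m => hlevel (u m) (hu m)] with x hx
  have hu0' : Tendsto (fun m => 6 * (u m : ℝ≥0∞)) atTop (𝓝 0) := by
    simpa using ENNReal.Tendsto.const_mul (a := 6) (ENNReal.tendsto_coe.2 hu0)
      (.inr ENNReal.ofNat_ne_top)
  refine tendsto_order.2 ⟨fun a ha => (not_lt_zero ha).elim, fun c hc => ?_⟩
  obtain ⟨m, hm⟩ := (hu0'.eventually_lt_const hc).exists
  exact (hx m).mono fun r hr => hr.trans_lt hm

lemma ennreal_le_of_forall_one_lt_le_mul {y z : ℝ≥0∞} (h : ∀ a : ℝ≥0, 1 < a → y ≤ a * z) :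
    y ≤ z := by
  have hlim : Tendsto (fun a : ℝ≥0 => (a : ℝ≥0∞) * z) (𝓝[>] 1) (𝓝 (1 * z)) :=
    ENNReal.Tendsto.mul_const
      ((ENNReal.continuous_coe.tendsto' 1 1 rfl).mono_left nhdsWithin_le_nhds) (.inl one_ne_zero)
  rw [one_mul] at hlim
  exact ge_of_tendsto hlim (eventually_mem_nhdsWithin.mono h)

lemma limsup_choquetAverage_enorm_le
    (hx : Tendsto (fun r => choquetAverage μ (ball x r) fun y => ‖f y - f x‖ₑ) (𝓝[>] 0) (𝓝 0)) :
    limsup (fun r => choquetAverage μ (ball x r) fun y => ‖f y‖ₑ) (𝓝[>] 0) ≤ ‖f x‖ₑ := by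
  refine ennreal_le_of_forall_one_lt_le_mul fun a ha => ?_
  have hupper (r : ℝ) : (choquetAverage μ (ball x r) fun y => ‖f y‖ₑ) ≤
      a * ‖f x‖ₑ + a.conjExponent * choquetAverage μ (ball x r) fun y => ‖f y - f x‖ₑ :=
    calc (choquetAverage μ (ball x r) fun y => ‖f y‖ₑ)
        ≤ a * choquetAverage μ (ball x r) (fun _ => ‖f x‖ₑ) +
            a.conjExponent * choquetAverage μ (ball x r) fun y => ‖f y - f x‖ₑ :=
          choquetAverage_le_add (.conjExponent ha) fun y _ => by
            simpa using enorm_add_le (f x) (f y - f x)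
      _ ≤ _ := by gcongr; exact choquetAverage_const_le _
  have hlim := (tendsto_const_nhds (x := (a : ℝ≥0∞) * ‖f x‖ₑ)).add
    (ENNReal.Tendsto.const_mul (a := (a.conjExponent : ℝ≥0∞)) hx (.inr ENNReal.coe_ne_top))
  rw [mul_zero, add_zero] at hlim
  exact (limsup_le_limsup (.of_forall hupper)).trans hlim.limsup_eq.le

lemma enorm_le_liminf_choquetAverage (hμ : ∀ r > 0, μ (ball x r) ≠ 0)
    (hμ' : ∀ r, μ (ball x r) ≠ ⊤)
    (hx : Tendsto (fun r => choquetAverage μ (ball x r) fun y => ‖f y - f x‖ₑ) (𝓝[>] 0) (𝓝 0)) :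
    ‖f x‖ₑ ≤ liminf (fun r => choquetAverage μ (ball x r) fun y => ‖f y‖ₑ) (𝓝[>] 0) := by
  refine ennreal_le_of_forall_one_lt_le_mul fun a ha => ?_
  have ha0 : (a : ℝ≥0∞) ≠ 0 := by exact_mod_cast (one_pos.trans ha).ne'
  have hlower : ∀ᶠ r in 𝓝[>] 0, (‖f x‖ₑ - a.conjExponent *
      choquetAverage μ (ball x r) fun y => ‖f y - f x‖ₑ) / a ≤
        choquetAverage μ (ball x r) fun y => ‖f y‖ₑ := by
    filter_upwards [self_mem_nhdsWithin] with r hr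
    refine ENNReal.div_le_of_le_mul' (tsub_le_iff_right.2 ?_)
    calc ‖f x‖ₑ = choquetAverage μ (ball x r) (fun _ => ‖f x‖ₑ) :=
          (choquetAverage_const (hμ r hr) (hμ' r) _).symm
      _ ≤ _ := choquetAverage_le_add (.conjExponent ha) fun y _ => by
          simpa [enorm_sub_rev (f y)] using enorm_add_le (f y) (f x - f y)
  have hlim := ENNReal.Tendsto.div_const (b := (a : ℝ≥0∞))
    (ENNReal.Tendsto.sub tendsto_const_nhds
      (ENNReal.Tendsto.const_mul (a := (a.conjExponent : ℝ≥0∞)) hx (.inr ENNReal.coe_ne_top))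
      (.inl (enorm_ne_top (x := f x)))) (.inr ha0)
  rw [mul_zero, tsub_zero] at hlim
  rw [← ENNReal.div_le_iff' ha0 ENNReal.coe_ne_top]
  exact hlim.liminf_eq.ge.trans (liminf_le_liminf hlower)

theorem tendsto_choquetAverage_enorm (hμ : ∀ r > 0, μ (ball x r) ≠ 0)
    (hμ' : ∀ r, μ (ball x r) ≠ ⊤)
    (hx : Tendsto (fun r => choquetAverage μ (ball x r) fun y => ‖f y - f x‖ₑ) (𝓝[>] 0) (𝓝 0)) :
    Tendsto (fun r => choquetAverage μ (ball x r) fun y => ‖f y‖ₑ) (𝓝[>] 0) (𝓝 ‖f x‖ₑ) :=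
  tendsto_of_le_liminf_of_limsup_le (enorm_le_liminf_choquetAverage hμ hμ' hx)
    (limsup_choquetAverage_enorm_le hx)

end LebesguePoint

/-- A dyadic cube of `ℝⁿ`, encoded by its level `k` and its corner `m`. As sets, cubes in dimension
`0` coincide at all levels, so the index is the more faithful object. -/
@[ext]
structure DyadicIndex (n : ℕ) where
  /-- The side length is `2 ^ level`. -/
  level : ℤ
  /-- The lower corner is `2 ^ level • corner`. -/
  corner : Fin n → ℤ

namespace DyadicIndex

variable {n : ℕ} {Q P : DyadicIndex n} {x y : En n} {δ : ℝ}

instance : Countable (DyadicIndex n) :=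
  Function.Injective.countable (f := fun Q : DyadicIndex n => (Q.level, Q.corner))
    fun _ _ h => DyadicIndex.ext (congrArg Prod.fst h) (congrArg Prod.snd h)

/-- The side length `ℓ(Q)`. -/
def side (Q : DyadicIndex n) : ℝ := 2 ^ Q.level

/-- The set of points of the cube. -/
def cube (Q : DyadicIndex n) : Set (En n) := dyadicCube n Q.level Q.corner

/-- The weight `ℓ(Q)^δ` of a cube in the `δ`-dimensional content. -/
def weight (δ : ℝ) (Q : DyadicIndex n) : ℝ≥0∞ := ENNReal.ofReal (Q.side ^ δ)

lemma side_pos (Q : DyadicIndex n) : 0 < Q.side := zpow_pos two_pos _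

lemma mem_cube_iff : x ∈ Q.cube ↔ ∀ i, ⌊x i / Q.side⌋ = Q.corner i :=
  forall_congr' fun i => by
    rw [Int.floor_eq_iff, le_div_iff₀ Q.side_pos, div_lt_iff₀ Q.side_pos, side]

lemma cube_nonempty (Q : DyadicIndex n) : Q.cube.Nonempty :=
  ⟨WithLp.toLp 2 fun i => Q.corner i * Q.side, mem_cube_iff.2 fun i => by
    simp [mul_div_cancel_right₀ _ Q.side_pos.ne']⟩

lemma floor_div_side (h : Q.level ≤ P.level) (t : ℝ) :
    ⌊t / P.side⌋ = ⌊t / Q.side⌋ / 2 ^ (P.level - Q.level).toNat := by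
  have hside : P.side = Q.side * ((2 ^ (P.level - Q.level).toNat : ℕ) : ℝ) := by
    rw [side, side, Nat.cast_pow, ← zpow_natCast, Int.toNat_of_nonneg (sub_nonneg.2 h),
      Nat.cast_ofNat, ← zpow_add₀ two_ne_zero, add_sub_cancel]
  rw [hside, ← div_div, Int.floor_div_natCast]
  norm_cast

lemma cube_subset_cube (h : Q.level ≤ P.level) (hmeet : (Q.cube ∩ P.cube).Nonempty) :
    Q.cube ⊆ P.cube := by
  obtain ⟨x, hxQ, hxP⟩ := hmeet
  simp only [mem_cube_iff, subset_def] at hxQ hxP ⊢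
  intro y hy i
  rw [floor_div_side h, hy i, ← hxQ i, ← floor_div_side h, hxP i]

lemma eq_of_level_eq (h : Q.level = P.level) (hmeet : (Q.cube ∩ P.cube).Nonempty) : Q = P := by
  obtain ⟨x, hxQ, hxP⟩ := hmeet
  refine DyadicIndex.ext h (funext fun i => ?_)
  rw [← mem_cube_iff.1 hxQ i, ← mem_cube_iff.1 hxP i, side, side, h]

-- The levels are compared explicitly because inclusion of the cubes forgets them if `n = 0`.
instance : PartialOrder (DyadicIndex n) where
  le Q P := Q.level ≤ P.level ∧ Q.cube ⊆ P.cube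
  le_refl _ := ⟨le_rfl, subset_rfl⟩
  le_trans _ _ _ h h' := ⟨h.1.trans h'.1, h.2.trans h'.2⟩
  le_antisymm Q _ h h' := eq_of_level_eq (h.1.antisymm h'.1)
    (Q.cube_nonempty.mono (subset_inter subset_rfl h.2))

lemma le_or_ge_of_mem (hQ : x ∈ Q.cube) (hP : x ∈ P.cube) : Q ≤ P ∨ P ≤ Q :=
  (le_total Q.level P.level).imp (fun h => ⟨h, cube_subset_cube h ⟨x, hQ, hP⟩⟩)
    fun h => ⟨h, cube_subset_cube h ⟨x, hP, hQ⟩⟩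

lemma pairwiseDisjoint_cube {S : Set (DyadicIndex n)} (hS : IsAntichain (· ≤ ·) S) :
    S.PairwiseDisjoint cube := fun _ hQ _ hP hne =>
  disjoint_left.2 fun _ hxQ hxP =>
    (le_or_ge_of_mem hxQ hxP).elim (hS hQ hP hne) (hS hP hQ hne.symm)

lemma pairwiseDisjoint_Iic {S : Set (DyadicIndex n)} (hS : IsAntichain (· ≤ ·) S) :
    S.PairwiseDisjoint Iic := fun _ hQ _ hP hne =>
  disjoint_left.2 fun R hRQ hRP =>
    have ⟨_, hx⟩ := R.cube_nonempty
    disjoint_left.1 (pairwiseDisjoint_cube hS hQ hP hne) (hRQ.2 hx) (hRP.2 hx)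

lemma side_mono (h : Q.level ≤ P.level) : Q.side ≤ P.side :=
  zpow_le_zpow_right₀ one_le_two h

lemma weight_ne_zero : weight δ Q ≠ 0 := by
  simpa [weight] using Real.rpow_pos_of_pos Q.side_pos δ

lemma weight_ne_top : weight δ Q ≠ ⊤ := ENNReal.ofReal_ne_top

lemma weight_mono (hδ : 0 ≤ δ) (h : Q.level ≤ P.level) : weight δ Q ≤ weight δ P :=
  ENNReal.ofReal_le_ofReal (Real.rpow_le_rpow Q.side_pos.le (side_mono h) hδ)

lemma weight_congr (h : Q.level = P.level) : weight δ Q = weight δ P := by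
  rw [weight, weight, side, side, h]

lemma exists_level_le_of_weight_le (hδ : 0 < δ) {R : ℝ≥0∞} (hR : R ≠ ⊤) :
    ∃ K : ℤ, ∀ Q : DyadicIndex n, weight δ Q ≤ R → Q.level ≤ K := by
  have hgrowth : Tendsto (fun m : ℕ => ((2 : ℝ) ^ (m : ℤ)) ^ δ) atTop atTop := by
    refine (tendsto_rpow_atTop hδ).comp ?_
    simpa using tendsto_pow_atTop_atTop_of_one_lt (one_lt_two (α := ℝ))
  obtain ⟨m, hm⟩ := (hgrowth.eventually_gt_atTop R.toReal).exists
  refine ⟨m, fun Q hQ => ?_⟩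
  by_contra! hlt
  have hle : weight δ ⟨m, Q.corner⟩ ≤ R := (weight_mono hδ.le hlt.le).trans hQ
  exact hm.not_ge (ENNReal.ofReal_le_iff_le_toReal hR |>.1 hle)

lemma exists_le_maximal {F : Set (DyadicIndex n)} {K : ℤ} (hK : ∀ Q ∈ F, Q.level ≤ K)
    (hQ : Q ∈ F) : ∃ P, Q ≤ P ∧ Maximal (· ∈ F) P := by
  obtain ⟨k, ⟨P, hP, hQP, rfl⟩, hmax⟩ := Int.exists_greatest_of_bdd
    (P := fun k => ∃ P ∈ F, Q ≤ P ∧ P.level = k) ⟨K, by rintro _ ⟨P, hP, -, rfl⟩; exact hK P hP⟩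
    ⟨Q.level, Q, hQ, le_rfl, rfl⟩
  refine ⟨P, hQP, hP, fun R hR hPR => ?_⟩
  have hlevel : R.level = P.level := (hmax _ ⟨R, hR, hQP.trans hPR, rfl⟩).antisymm hPR.1
  exact (eq_of_level_eq hlevel (P.cube_nonempty.mono (subset_inter hPR.2 subset_rfl))).le

lemma mk_injective (k : ℤ) : Function.Injective (DyadicIndex.mk (n := n) k) :=
  fun _ _ h => congrArg corner h

/-- The `3ⁿ` cubes of the level of `Q` that touch `Q`, including `Q` itself. -/
def neighbours (Q : DyadicIndex n) : Finset (DyadicIndex n) :=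
  (Fintype.piFinset fun i => Finset.Icc (Q.corner i - 1) (Q.corner i + 1)).map
    ⟨DyadicIndex.mk Q.level, mk_injective Q.level⟩

lemma mem_neighbours : P ∈ Q.neighbours ↔
    P.level = Q.level ∧ ∀ i, Q.corner i - 1 ≤ P.corner i ∧ P.corner i ≤ Q.corner i + 1 := by
  simp only [neighbours, Finset.mem_map, Fintype.mem_piFinset, Finset.mem_Icc]
  exact ⟨by rintro ⟨m, hm, rfl⟩; exact ⟨rfl, hm⟩,
    fun h => ⟨P.corner, h.2, DyadicIndex.ext h.1.symm rfl⟩⟩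

lemma card_neighbours (Q : DyadicIndex n) : Q.neighbours.card = 3 ^ n := by
  have hcard (k : ℤ) : k + 1 + 1 - (k - 1) = 3 := by ring
  simp [neighbours, hcard]

lemma thickening_subset_iUnion_neighbours (Q : DyadicIndex n) :
    thickening Q.side Q.cube ⊆ ⋃ P ∈ Q.neighbours, P.cube := by
  intro x hx
  obtain ⟨y, hy, hxy⟩ := mem_thickening_iff.1 hx
  refine mem_iUnion₂.2 ⟨⟨Q.level, fun i => ⌊x i / Q.side⌋⟩, mem_neighbours.2 ⟨rfl, fun i => ?_⟩,
    mem_cube_iff.2 fun i => rfl⟩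
  have hdist : |x i - y i| < Q.side :=
    (PiLp.norm_apply_le (x - y) i).trans_lt (by rwa [← dist_eq_norm])
  obtain ⟨hlo, hhi⟩ : y i / Q.side - 1 ≤ x i / Q.side ∧ x i / Q.side ≤ y i / Q.side + 1 := by
    have := abs_lt.1 hdist
    have := Q.side_pos
    constructor <;> field_simp <;> linarith
  rw [← mem_cube_iff.1 hy i, ← Int.floor_sub_one, ← Int.floor_add_one]
  exact ⟨Int.floor_mono hlo, Int.floor_mono hhi⟩

lemma thickening_cube_mono (h : Q ≤ P) : thickening Q.side Q.cube ⊆ thickening P.side P.cube :=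
  (thickening_mono (side_mono h.1) _).trans (thickening_subset_of_subset _ h.2)

lemma cube_subset_thickening (Q : DyadicIndex n) : Q.cube ⊆ thickening Q.side Q.cube :=
  self_subset_thickening Q.side_pos _

end DyadicIndex

section DyadicContent

open DyadicIndex

variable {n : ℕ} {δ : ℝ}

lemma dyadicContent_eq_iInf (E : Set (En n)) : dyadicContent n δ E =
    ⨅ (c : ℕ → DyadicIndex n) (_ : E ⊆ interior (⋃ i, (c i).cube)), ∑' i, weight δ (c i) :=
  le_antisymm (le_iInf₂ fun c hc => iInf₂_le (fun i => ((c i).level, (c i).corner)) hc)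
    (le_iInf₂ fun c hc => iInf₂_le (fun i => (⟨(c i).1, (c i).2⟩ : DyadicIndex n)) hc)

lemma exists_weight_le (hδ : 0 < δ) {ε : ℝ≥0} (hε : 0 < ε) :
    ∃ Q : DyadicIndex n, weight δ Q ≤ ε := by
  have hzero : Tendsto (fun m : ℕ => ((2 : ℝ) ^ (-(m : ℤ))) ^ δ) atTop (𝓝 0) := by
    rw [← Real.zero_rpow hδ.ne']
    refine Tendsto.rpow_const ?_ (.inr hδ.le)
    simpa using tendsto_pow_atTop_nhds_zero_of_lt_one (r := (2⁻¹ : ℝ)) (by norm_num) (by norm_num)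
  obtain ⟨m, hm⟩ := (hzero.eventually_lt_const (NNReal.coe_pos.2 hε)).exists
  exact ⟨⟨-m, 0⟩, ENNReal.ofReal_le_of_le_toReal hm.le⟩

lemma exists_tsum_weight_le (hδ : 0 < δ) {ε : ℝ≥0} (hε : 0 < ε) :
    ∃ c : ℕ → DyadicIndex n, ∑' i, weight δ (c i) ≤ ε := by
  obtain ⟨ε', hε', hsum⟩ := ENNReal.exists_pos_sum_of_countable
    (ε := (ε : ℝ≥0∞)) (by simpa using hε.ne') ℕ
  choose c hc using fun i => exists_weight_le (n := n) hδ (hε' i)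
  exact ⟨c, (ENNReal.tsum_le_tsum hc).trans hsum.le⟩

-- Coverings in `dyadicContent` are infinite sequences, so a finite family has to be padded with
-- infinitely many cubes of small total weight.
lemma dyadicContent_le_tsum (hδ : 0 < δ) {ι : Type*} [Countable ι] (c : ι → DyadicIndex n)
    {E : Set (En n)} (hE : E ⊆ interior (⋃ i, (c i).cube)) :
    dyadicContent n δ E ≤ ∑' i, weight δ (c i) := by
  refine ENNReal.le_of_forall_pos_le_add fun ε hε _ => ?_
  obtain ⟨small, hsmall⟩ := exists_tsum_weight_le (n := n) hδ hε
  let padded : ι ⊕ ℕ → DyadicIndex n := Sum.elim c small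
  obtain ⟨e⟩ : Nonempty (ℕ ≃ ι ⊕ ℕ) := nonempty_equiv_of_countable
  have hcover : ⋃ i, (c i).cube ⊆ ⋃ j, (padded (e j)).cube := iUnion_subset fun i => by
    simpa [padded] using subset_iUnion (fun j => (padded (e j)).cube) (e.symm (.inl i))
  calc dyadicContent n δ E ≤ ∑' j, weight δ (padded (e j)) := by
        rw [dyadicContent_eq_iInf]
        exact iInf₂_le (fun j => padded (e j)) (hE.trans (interior_mono hcover))
    _ = ∑' i, weight δ (c i) + ∑' j, weight δ (small j) := by
        rw [e.tsum_eq (fun j => weight δ (padded j)), ENNReal.summable.tsum_sum ENNReal.summable]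
        rfl
    _ ≤ ∑' i, weight δ (c i) + ε := by gcongr

lemma dyadicContent_mono {s t : Set (En n)} (h : s ⊆ t) :
    dyadicContent n δ s ≤ dyadicContent n δ t :=
  le_iInf₂ fun c hc => iInf₂_le c (h.trans hc)

lemma exists_tsum_weight_le_dyadicContent_add {E : Set (En n)} (hE : dyadicContent n δ E ≠ ⊤)
    {ε : ℝ≥0} (hε : 0 < ε) : ∃ c : ℕ → DyadicIndex n, E ⊆ interior (⋃ i, (c i).cube) ∧
      ∑' i, weight δ (c i) ≤ dyadicContent n δ E + ε := by
  have hlt := ENNReal.lt_add_right hE (ENNReal.coe_ne_zero.2 hε.ne')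
  conv_lhs at hlt => rw [dyadicContent_eq_iInf]
  simp only [iInf_lt_iff] at hlt
  obtain ⟨c, hc, hlt⟩ := hlt
  exact ⟨c, hc, hlt.le⟩

lemma dyadicContent_iUnion_le (hδ : 0 < δ) (s : ℕ → Set (En n)) :
    dyadicContent n δ (⋃ i, s i) ≤ ∑' i, dyadicContent n δ (s i) := by
  refine ENNReal.le_of_forall_pos_le_add fun ε hε hfin => ?_
  obtain ⟨ε', hε', hsum⟩ := ENNReal.exists_pos_sum_of_countable
    (ε := (ε : ℝ≥0∞)) (by simpa using hε.ne') ℕ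
  choose c hc hle using fun i => exists_tsum_weight_le_dyadicContent_add
    (ne_top_of_le_ne_top hfin.ne (ENNReal.le_tsum i)) (hε' i)
  have hcover : ⋃ i, s i ⊆ interior (⋃ p : ℕ × ℕ, (c p.1 p.2).cube) :=
    iUnion_subset fun i => (hc i).trans <| interior_mono <| iUnion_subset fun j =>
      subset_iUnion (fun p : ℕ × ℕ => (c p.1 p.2).cube) (i, j)
  calc dyadicContent n δ (⋃ i, s i) ≤ ∑' p : ℕ × ℕ, weight δ (c p.1 p.2) :=
        dyadicContent_le_tsum hδ _ hcover
    _ = ∑' i, ∑' j, weight δ (c i j) := ENNReal.tsum_prod (f := fun i j => weight δ (c i j))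
    _ ≤ ∑' i, (dyadicContent n δ (s i) + ε' i) := ENNReal.tsum_le_tsum hle
    _ ≤ ∑' i, dyadicContent n δ (s i) + ε := by rw [ENNReal.tsum_add]; gcongr

variable (n) in
/-- The dyadic Hausdorff content as an outer measure. For `δ = 0` the content of `∅` would be `∞`,
since coverings in `dyadicContent` are infinite sequences. -/
def dyadicOuterMeasure (hδ : 0 < δ) : OuterMeasure (En n) where
  measureOf := dyadicContent n δ
  empty := nonpos_iff_eq_zero.1 <| by
    simpa using dyadicContent_le_tsum (n := n) hδ (Empty.elim : Empty → _) (empty_subset _)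
  mono := dyadicContent_mono
  iUnion_nat s _ := dyadicContent_iUnion_le hδ s

lemma dyadicContent_thickening_le (hδ : 0 < δ) (Q : DyadicIndex n) :
    dyadicContent n δ (thickening Q.side Q.cube) ≤ 3 ^ n * weight δ Q := by
  have hcover : thickening Q.side Q.cube ⊆ interior (⋃ P : Q.neighbours, P.1.cube) :=
    interior_maximal (by simpa [iUnion_subtype] using Q.thickening_subset_iUnion_neighbours)
      isOpen_thickening
  calc dyadicContent n δ (thickening Q.side Q.cube) ≤ ∑' P : Q.neighbours, weight δ P.1 :=
        dyadicContent_le_tsum hδ _ hcover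
    _ = ∑ P ∈ Q.neighbours, weight δ P := Finset.tsum_subtype Q.neighbours (weight δ)
    _ = 3 ^ n * weight δ Q := by
      rw [Finset.sum_congr rfl fun P hP => weight_congr (mem_neighbours.1 hP).1, Finset.sum_const,
        card_neighbours, nsmul_eq_mul, Nat.cast_pow, Nat.cast_ofNat]

lemma dyadicContent_cube_le (hδ : 0 < δ) (Q : DyadicIndex n) :
    dyadicContent n δ Q.cube ≤ 3 ^ n * weight δ Q :=
  (dyadicContent_mono Q.cube_subset_thickening).trans (dyadicContent_thickening_le hδ Q)

lemma rpow_tsum_le_tsum_rpow {ι : Type*} (a : ι → ℝ≥0∞) {p : ℝ} (hp : 0 < p) (hp1 : p ≤ 1) :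
    (∑' i, a i) ^ p ≤ ∑' i, a i ^ p := by
  have hfin (s : Finset ι) : (∑ i ∈ s, a i) ^ p ≤ ∑ i ∈ s, a i ^ p :=
    Finset.le_sum_of_subadditive (· ^ p) (ENNReal.zero_rpow_of_pos hp).le
      (fun x y => ENNReal.rpow_add_le_add_rpow x y hp.le hp1) s a
  have hlim : Tendsto (fun s : Finset ι => (∑ i ∈ s, a i) ^ p) atTop (𝓝 ((∑' i, a i) ^ p)) :=
    (ENNReal.continuous_rpow_const.tendsto _).comp ENNReal.summable.hasSum
  exact le_of_tendsto' hlim fun s => (hfin s).trans (ENNReal.sum_le_tsum s)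

lemma volume_cube (Q : DyadicIndex n) : volume Q.cube = ENNReal.ofReal Q.side ^ n := by
  have hpi : Q.cube = WithLp.ofLp ⁻¹' (univ.pi fun i =>
      Ico (Q.corner i * Q.side) ((Q.corner i + 1) * Q.side)) := by
    ext x
    simp [cube, dyadicCube, side]
  have hlen (i : Fin n) :
      (Q.corner i + 1) * Q.side - Q.corner i * Q.side = Q.side := by ring
  rw [hpi, (PiLp.volume_preserving_ofLp (Fin n)).measure_preimage
    (MeasurableSet.univ_pi fun _ => measurableSet_Ico).nullMeasurableSet, volume_pi_pi]
  simp [hlen]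

lemma volume_rpow_le_dyadicContent (hδ : 0 < δ) (hδn : δ ≤ n) (E : Set (En n)) :
    volume E ^ (δ / n) ≤ dyadicContent n δ E := by
  have hn : (0 : ℝ) < n := hδ.trans_le hδn
  have hcube (Q : DyadicIndex n) : volume Q.cube ^ (δ / n) = weight δ Q := by
    rw [volume_cube, ← ENNReal.rpow_natCast, ← ENNReal.rpow_mul, mul_div_cancel₀ _ hn.ne',
      ENNReal.ofReal_rpow_of_pos Q.side_pos, weight]
  rw [dyadicContent_eq_iInf]
  refine le_iInf₂ fun c hc => ?_
  calc volume E ^ (δ / n) ≤ (∑' i, volume (c i).cube) ^ (δ / n) := by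
        gcongr
        exact (measure_mono (hc.trans interior_subset)).trans (measure_iUnion_le _)
    _ ≤ ∑' i, volume (c i).cube ^ (δ / n) :=
        rpow_tsum_le_tsum_rpow _ (by positivity) ((div_le_one hn).2 hδn)
    _ = ∑' i, weight δ (c i) := by simp only [hcube]

lemma dyadicContent_ball_ne_zero (hδ : 0 < δ) (hδn : δ ≤ n) (x : En n) {r : ℝ} (hr : 0 < r) :
    dyadicContent n δ (ball x r) ≠ 0 :=
  ((ENNReal.rpow_pos (measure_ball_pos volume x hr) measure_ball_lt_top.ne).trans_le
    (volume_rpow_le_dyadicContent hδ hδn _)).ne'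

lemma exists_mem_cube_side_mem_Icc (x : En n) {r : ℝ} (hr : 0 < r) :
    ∃ Q : DyadicIndex n, x ∈ Q.cube ∧ Q.side ∈ Icc r (2 * r) := by
  obtain ⟨k, hk, hk'⟩ := exists_mem_Ioc_zpow hr one_lt_two
  refine ⟨⟨k + 1, fun i => ⌊x i / 2 ^ (k + 1)⌋⟩, mem_cube_iff.2 fun i => rfl, hk', ?_⟩
  rw [side, zpow_add_one₀ two_ne_zero, mul_comm]
  gcongr

lemma ball_subset_thickening_cube {Q : DyadicIndex n} {x : En n} {r : ℝ} (hx : x ∈ Q.cube)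
    (hr : r ≤ Q.side) : ball x r ⊆ thickening Q.side Q.cube :=
  (ball_subset_ball hr).trans (ball_subset_thickening hx _)

lemma dyadicContent_ball_ne_top (hδ : 0 < δ) (x : En n) (r : ℝ) :
    dyadicContent n δ (ball x r) ≠ ⊤ := by
  obtain ⟨Q, hx, hr, -⟩ := exists_mem_cube_side_mem_Icc x (r := max r 1) (by positivity)
  refine ne_top_of_le_ne_top ?_ ((dyadicContent_mono (ball_subset_thickening_cube hx
    ((le_max_left _ _).trans hr))).trans (dyadicContent_thickening_le hδ Q))
  exact ENNReal.mul_ne_top (by finiteness) weight_ne_top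

lemma exists_weight_le_mul_dyadicContent_ball (hδ : 0 < δ) (hδn : δ ≤ n) :
    ∃ K : ℝ≥0, K ≠ 0 ∧ ∀ (Q : DyadicIndex n) (x : En n) (r : ℝ), Q.side ≤ 2 * r →
      weight δ Q ≤ K * dyadicContent n δ (ball x r) := by
  have hn : (0 : ℝ) < n := hδ.trans_le hδn
  have hunit : volume (ball (0 : En n) 1) ≠ 0 := (measure_ball_pos volume 0 one_pos).ne'
  obtain ⟨K, hK⟩ : ∃ K : ℝ≥0, (K : ℝ≥0∞) = (2 ^ n / volume (ball (0 : En n) 1)) ^ (δ / n) :=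
    ⟨_, ENNReal.coe_toNNReal (by finiteness)⟩
  have hK0 : (K : ℝ≥0∞) ≠ 0 := hK ▸ (ENNReal.rpow_pos
    (ENNReal.div_pos (by positivity) measure_ball_lt_top.ne) (by finiteness)).ne'
  refine ⟨K, ENNReal.coe_ne_zero.1 hK0, fun Q x r hQ => ?_⟩
  have hr : 0 < r := by linarith [Q.side_pos]
  have hball : volume (ball x r) = ENNReal.ofReal r ^ n * volume (ball (0 : En n) 1) := by
    rw [Measure.addHaar_ball_of_pos _ _ hr, finrank_euclideanSpace_fin, ENNReal.ofReal_pow hr.le]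
  calc weight δ Q ≤ ENNReal.ofReal ((2 * r) ^ δ) :=
        ENNReal.ofReal_le_ofReal (Real.rpow_le_rpow Q.side_pos.le hQ hδ.le)
    _ = (2 ^ n * ENNReal.ofReal r ^ n) ^ (δ / n) := by
        rw [← mul_pow, ← ENNReal.rpow_natCast, ← ENNReal.rpow_mul, mul_div_cancel₀ _ hn.ne',
          ← ENNReal.ofReal_rpow_of_pos (by positivity), ENNReal.ofReal_mul two_pos.le,
          ENNReal.ofReal_ofNat]
    _ = K * volume (ball x r) ^ (δ / n) := by
        rw [hK, ← ENNReal.mul_rpow_of_nonneg _ _ (by positivity), hball,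
          mul_comm (_ ^ n) (volume _), ← mul_assoc,
          ENNReal.div_mul_cancel hunit measure_ball_lt_top.ne]
    _ ≤ _ := by gcongr; exact volume_rpow_le_dyadicContent hδ hδn _

end DyadicContent

section Packing

open DyadicIndex

variable {n : ℕ} {δ : ℝ} {S F G : Set (DyadicIndex n)} {P Q : DyadicIndex n}

/-- The total weight of the cubes of `S` contained in `P`. -/
def massBelow (δ : ℝ) (S : Set (DyadicIndex n)) (P : DyadicIndex n) : ℝ≥0∞ :=
  ∑' Q : ↥(S ∩ Iic P), weight δ Q.1

/-- The packing condition `∑_{Q ∈ S, Q ⊆ P} ℓ(Q)^δ ≤ 2 ℓ(P)^δ` for all dyadic `P`, which makes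
the weights of `S` behave like a measure of dimension `δ`. -/
def IsPacked (δ : ℝ) (S : Set (DyadicIndex n)) : Prop :=
  ∀ P, massBelow δ S P ≤ 2 * weight δ P

lemma massBelow_eq_tsum_indicator :
    massBelow δ S P = ∑' Q, (S ∩ Iic P).indicator (weight δ) Q :=
  tsum_subtype _ _

lemma massBelow_mono (h : F ⊆ G) : massBelow δ F P ≤ massBelow δ G P :=
  ENNReal.tsum_mono_subtype _ (inter_subset_inter_left _ h)

lemma massBelow_le_tsum : massBelow δ S P ≤ ∑' Q : S, weight δ Q.1 :=
  ENNReal.tsum_mono_subtype _ inter_subset_left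

lemma weight_le_massBelow (hQ : Q ∈ S) : weight δ Q ≤ massBelow δ S Q :=
  ENNReal.le_tsum (f := fun R : ↥(S ∩ Iic Q) => weight δ R.1) ⟨Q, hQ, mem_Iic.2 le_rfl⟩

lemma massBelow_insert_le : massBelow δ (insert Q S) P ≤ massBelow δ S P + weight δ Q := by
  have hsub : insert Q S ∩ Iic P ⊆ S ∩ Iic P ∪ {Q} := by
    rintro R ⟨rfl | hR, hRP⟩
    exacts [.inr rfl, .inl ⟨hR, hRP⟩]
  calc massBelow δ (insert Q S) P ≤ ∑' R : ↥(S ∩ Iic P ∪ {Q}), weight δ R.1 :=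
        ENNReal.tsum_mono_subtype _ hsub
    _ ≤ massBelow δ S P + ∑' R : ({Q} : Set (DyadicIndex n)), weight δ R.1 :=
        ENNReal.tsum_union_le _ _ _
    _ = massBelow δ S P + weight δ Q := by rw [tsum_singleton Q (weight δ)]

lemma massBelow_insert_of_not_le (h : ¬ Q ≤ P) : massBelow δ (insert Q S) P = massBelow δ S P := by
  rw [massBelow, massBelow, insert_inter_of_notMem (by exact h)]

lemma isOfFiniteCharacter_isPacked :
    Order.IsOfFiniteCharacter {S | S ⊆ F ∧ IsPacked δ S} := by
  refine fun S => ⟨fun h T hT _ => ⟨hT.trans h.1, fun P => (massBelow_mono hT).trans (h.2 P)⟩,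
    fun h => ⟨fun Q hQ => ?_, fun P => ?_⟩⟩
  · exact (h {Q} (singleton_subset_iff.2 hQ) (finite_singleton Q)).1 rfl
  · rw [massBelow_eq_tsum_indicator, ENNReal.tsum_eq_iSup_sum]
    refine iSup_le fun T => ?_
    calc ∑ Q ∈ T, (S ∩ Iic P).indicator (weight δ) Q
        = ∑ Q ∈ T, ((S ∩ T) ∩ Iic P).indicator (weight δ) Q :=
          Finset.sum_congr rfl fun Q hQ => indicator_eq_indicator (by simp [hQ]) rfl
      _ ≤ massBelow δ (S ∩ T) P :=
          massBelow_eq_tsum_indicator.symm ▸ ENNReal.sum_le_tsum T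
      _ ≤ 2 * weight δ P := (h _ inter_subset_left (T.finite_toSet.inter_of_right S)).2 P

-- In a maximal packed subfamily, a cube is left out only because an ancestor is already saturated.
lemma exists_isPacked (hδ : 0 ≤ δ) (F : Set (DyadicIndex n)) :
    ∃ S ⊆ F, IsPacked δ S ∧ ∀ Q ∈ F, ∃ P, Q ≤ P ∧ weight δ P ≤ massBelow δ S P := by
  obtain ⟨S, -, ⟨hSF, hS⟩, hmax⟩ := (isOfFiniteCharacter_isPacked (F := F) (δ := δ)).exists_maximal
    (x := ∅) ⟨empty_subset F, fun P => by simp [massBelow]⟩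
  refine ⟨S, hSF, hS, fun Q hQ => ?_⟩
  by_contra! hunsat
  have hinsert : IsPacked δ (insert Q S) := fun P => by
    by_cases hQP : Q ≤ P
    · calc massBelow δ (insert Q S) P ≤ massBelow δ S P + weight δ Q := massBelow_insert_le
        _ ≤ weight δ P + weight δ P :=
          add_le_add (hunsat P hQP).le (weight_mono hδ hQP.1)
        _ = 2 * weight δ P := (two_mul _).symm
    · exact (massBelow_insert_of_not_le hQP).trans_le (hS P)
  have hQS : Q ∈ S :=
    hmax ⟨insert_subset hQ hSF, hinsert⟩ (subset_insert Q S) (mem_insert Q S)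
  exact (hunsat Q le_rfl).not_ge (weight_le_massBelow hQS)

lemma tsum_massBelow_le (hG : IsAntichain (· ≤ ·) G) :
    ∑' P : G, massBelow δ S P ≤ ∑' Q : S, weight δ Q.1 := by
  have hdisj : G.PairwiseDisjoint fun P => S ∩ Iic P :=
    (pairwiseDisjoint_Iic hG).mono fun _ => inter_subset_right
  calc ∑' P : G, massBelow δ S P = ∑' Q : ↥(⋃ P ∈ G, S ∩ Iic P), weight δ Q.1 :=
        (ENNReal.tsum_biUnion' hdisj).symm
    _ ≤ ∑' Q : S, weight δ Q.1 :=
        ENNReal.tsum_mono_subtype _ (iUnion₂_subset fun _ _ => inter_subset_left)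

lemma iUnion_thickening_subset (hFG : ∀ Q ∈ F, ∃ P ∈ G, Q ≤ P) :
    ⋃ Q ∈ F, thickening Q.side Q.cube ⊆ ⋃ P ∈ G, thickening P.side P.cube :=
  iUnion₂_subset fun Q hQ =>
    have ⟨_, hP, hQP⟩ := hFG Q hQ
    (thickening_cube_mono hQP).trans
      (subset_biUnion_of_mem (u := fun P : DyadicIndex n => thickening P.side P.cube) hP)

lemma dyadicContent_iUnion_thickening_le (hδ : 0 < δ) (hFG : ∀ Q ∈ F, ∃ P ∈ G, Q ≤ P) :
    dyadicContent n δ (⋃ Q ∈ F, thickening Q.side Q.cube) ≤ 3 ^ n * ∑' P : G, weight δ P.1 :=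
  calc dyadicContent n δ (⋃ Q ∈ F, thickening Q.side Q.cube)
      ≤ dyadicContent n δ (⋃ P ∈ G, thickening P.side P.cube) :=
        dyadicContent_mono (iUnion_thickening_subset hFG)
    _ ≤ ∑' P : G, dyadicContent n δ (thickening P.1.side P.1.cube) :=
        measure_biUnion_le (dyadicOuterMeasure n hδ) G.to_countable _
    _ ≤ ∑' P : G, 3 ^ n * weight δ P.1 :=
        ENNReal.tsum_le_tsum fun P => dyadicContent_thickening_le hδ P.1
    _ = 3 ^ n * ∑' P : G, weight δ P.1 := ENNReal.tsum_mul_left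

theorem exists_isPacked_dyadicContent_le (hδ : 0 < δ) (F : Set (DyadicIndex n)) :
    ∃ S ⊆ F, IsPacked δ S ∧
      dyadicContent n δ (⋃ Q ∈ F, thickening Q.side Q.cube) ≤ 3 ^ n * ∑' Q : S, weight δ Q.1 := by
  obtain ⟨S, hSF, hS, hsat⟩ := exists_isPacked hδ.le F
  refine ⟨S, hSF, hS, ?_⟩
  by_cases htop : ∑' Q : S, weight δ Q.1 = ⊤
  · simp [htop]
  obtain ⟨K, hK⟩ := exists_level_le_of_weight_le (n := n) hδ htop
  let saturated : Set (DyadicIndex n) := {P | weight δ P ≤ massBelow δ S P}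
  have hbdd : ∀ P ∈ saturated, P.level ≤ K := fun P hP => hK P (hP.trans massBelow_le_tsum)
  have hcofinal : ∀ Q ∈ F, ∃ P ∈ {P | Maximal (· ∈ saturated) P}, Q ≤ P := fun Q hQ =>
    have ⟨R, hQR, hR⟩ := hsat Q hQ
    have ⟨P, hRP, hP⟩ := exists_le_maximal hbdd hR
    ⟨P, hP, hQR.trans hRP⟩
  calc _ ≤ 3 ^ n * ∑' P : {P | Maximal (· ∈ saturated) P}, weight δ P.1 :=
        dyadicContent_iUnion_thickening_le hδ hcofinal
    _ ≤ 3 ^ n * ∑' P : {P | Maximal (· ∈ saturated) P}, massBelow δ S P.1 := by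
        gcongr with P
        exact P.2.prop
    _ ≤ 3 ^ n * ∑' Q : S, weight δ Q.1 := by
        gcongr
        exact tsum_massBelow_le (setOfPred_maximal_antichain _)

lemma tsum_dyadicContent_cube_inter_cube_le (hδ : 0 < δ) (hanti : IsAntichain (· ≤ ·) S)
    (hS : IsPacked δ S) (P : DyadicIndex n) :
    ∑' Q : S, dyadicContent n δ (Q.1.cube ∩ P.cube) ≤ 2 * 3 ^ n * weight δ P := by
  have hempty : dyadicContent n δ ∅ = 0 := measure_empty (μ := dyadicOuterMeasure n hδ)
  by_cases hbelow : ∃ Q ∈ S, P ≤ Q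
  · obtain ⟨Q, hQ, hPQ⟩ := hbelow
    rw [tsum_eq_single (⟨Q, hQ⟩ : S)]
    · calc dyadicContent n δ (Q.cube ∩ P.cube) ≤ 3 ^ n * weight δ P :=
            (dyadicContent_mono inter_subset_right).trans (dyadicContent_cube_le hδ P)
        _ ≤ 2 * 3 ^ n * weight δ P := by
            rw [mul_assoc]; exact le_mul_of_one_le_left zero_le one_le_two
    · intro R hR
      have hdisj : Disjoint R.1.cube P.cube := (pairwiseDisjoint_cube hanti R.2 hQ
        (Subtype.coe_ne_coe.2 hR)).mono_right hPQ.2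
      rw [hdisj.inter_eq, hempty]
  · push Not at hbelow
    have hle (Q : S) : dyadicContent n δ (Q.1.cube ∩ P.cube) ≤
        3 ^ n * (Iic P).indicator (weight δ) Q.1 := by
      rcases (Q.1.cube ∩ P.cube).eq_empty_or_nonempty with hdisj | ⟨x, hxQ, hxP⟩
      · simp [hdisj, hempty]
      · have hQP : Q.1 ≤ P := (le_or_ge_of_mem hxQ hxP).resolve_right (hbelow Q.1 Q.2)
        rw [indicator_of_mem (mem_Iic.2 hQP)]
        exact (dyadicContent_mono inter_subset_left).trans (dyadicContent_cube_le hδ Q.1)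
    calc ∑' Q : S, dyadicContent n δ (Q.1.cube ∩ P.cube)
        ≤ 3 ^ n * ∑' Q : S, (Iic P).indicator (weight δ) Q.1 :=
          (ENNReal.tsum_le_tsum hle).trans_eq ENNReal.tsum_mul_left
      _ = 3 ^ n * massBelow δ S P := by
          rw [tsum_subtype S, indicator_indicator, massBelow_eq_tsum_indicator]
      _ ≤ 3 ^ n * (2 * weight δ P) := by gcongr; exact hS P
      _ = 2 * 3 ^ n * weight δ P := by ring

lemma tsum_dyadicContent_cube_inter_le (hδ : 0 < δ) (hanti : IsAntichain (· ≤ ·) S)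
    (hS : IsPacked δ S) (E : Set (En n)) :
    ∑' Q : S, dyadicContent n δ (Q.1.cube ∩ E) ≤ 2 * 3 ^ n * dyadicContent n δ E := by
  have hpos : (2 * 3 ^ n : ℝ≥0∞) ≠ 0 := by positivity
  have hfin : (2 * 3 ^ n : ℝ≥0∞) ≠ ⊤ := by finiteness
  simp only [dyadicContent_eq_iInf E, ENNReal.mul_iInf_of_ne hpos hfin]
  refine le_iInf₂ fun c hc => ?_
  have hcover (Q : S) : dyadicContent n δ (Q.1.cube ∩ E) ≤
      ∑' i, dyadicContent n δ (Q.1.cube ∩ (c i).cube) := by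
    refine (dyadicContent_mono ?_).trans (dyadicContent_iUnion_le hδ _)
    rw [← inter_iUnion]
    exact inter_subset_inter_right _ (hc.trans interior_subset)
  calc ∑' Q : S, dyadicContent n δ (Q.1.cube ∩ E)
      ≤ ∑' i, ∑' Q : S, dyadicContent n δ (Q.1.cube ∩ (c i).cube) :=
        (ENNReal.tsum_le_tsum hcover).trans_eq ENNReal.tsum_comm
    _ ≤ 2 * 3 ^ n * ∑' i, weight δ (c i) := by
        rw [← ENNReal.tsum_mul_left]
        exact ENNReal.tsum_le_tsum fun i =>
          tsum_dyadicContent_cube_inter_cube_le hδ hanti hS (c i)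

theorem tsum_outerChoquet_cube_le (hδ : 0 < δ) (hanti : IsAntichain (· ≤ ·) S)
    (hS : IsPacked δ S) (g : En n → ℝ≥0∞) :
    ∑' Q : S, outerChoquet (dyadicOuterMeasure n hδ) Q.1.cube g ≤
      2 * 3 ^ n * outerChoquet (dyadicOuterMeasure n hδ) univ g := by
  simp only [outerChoquet]
  rw [← lintegral_tsum fun Q : S => (measurable_measure_superlevel _ Q.1.cube g).aemeasurable,
    ← lintegral_const_mul' _ _ (by finiteness)]
  refine lintegral_mono fun t => ?_
  simp only [mem_univ, true_and]
  exact tsum_dyadicContent_cube_inter_le hδ hanti hS {x | ENNReal.ofReal t < g x}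

theorem mul_dyadicContent_iUnion_thickening_le (hδ : 0 < δ) (g : En n → ℝ≥0∞) {a : ℝ≥0}
    (ha : a ≠ 0) (hg : outerChoquet (dyadicOuterMeasure n hδ) univ g ≠ ⊤) :
    a * dyadicContent n δ (⋃ Q ∈ {Q : DyadicIndex n |
        a * weight δ Q ≤ outerChoquet (dyadicOuterMeasure n hδ) Q.cube g},
          thickening Q.side Q.cube) ≤
      2 * 9 ^ n * outerChoquet (dyadicOuterMeasure n hδ) univ g := by
  set I : Set (En n) → ℝ≥0∞ := fun s => outerChoquet (dyadicOuterMeasure n hδ) s g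
  set F : Set (DyadicIndex n) := {Q | a * weight δ Q ≤ I Q.cube}
  have ha' : (a : ℝ≥0∞) ≠ 0 := ENNReal.coe_ne_zero.2 ha
  obtain ⟨K, hK⟩ := exists_level_le_of_weight_le (n := n) hδ (ENNReal.div_ne_top hg ha')
  have hbdd : ∀ Q ∈ F, Q.level ≤ K := fun Q hQ => hK Q <| by
    rw [ENNReal.le_div_iff_mul_le (.inl ha') (.inl ENNReal.coe_ne_top), mul_comm]
    exact hQ.trans (outerChoquet_mono (subset_univ _) fun _ _ => le_rfl)
  let F' : Set (DyadicIndex n) := {Q | Maximal (· ∈ F) Q}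
  have hF' : ⋃ Q ∈ F, thickening Q.side Q.cube ⊆ ⋃ Q ∈ F', thickening Q.side Q.cube :=
    iUnion_thickening_subset fun Q hQ =>
      have ⟨P, hQP, hP⟩ := exists_le_maximal hbdd hQ
      ⟨P, hP, hQP⟩
  obtain ⟨S, hSF, hS, hcontent⟩ := exists_isPacked_dyadicContent_le hδ F'
  have hanti : IsAntichain (· ≤ ·) S := (setOfPred_maximal_antichain _).subset hSF
  have hsum : a * ∑' Q : S, weight δ Q.1 ≤ 2 * 3 ^ n * I univ := by
    rw [← ENNReal.tsum_mul_left]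
    exact (ENNReal.tsum_le_tsum fun Q : S => (hSF Q.2).prop).trans
      (tsum_outerChoquet_cube_le hδ hanti hS g)
  calc a * dyadicContent n δ (⋃ Q ∈ F, thickening Q.side Q.cube)
      ≤ a * (3 ^ n * ∑' Q : S, weight δ Q.1) := by
        gcongr; exact (dyadicContent_mono hF').trans hcontent
    _ = 3 ^ n * (a * ∑' Q : S, weight δ Q.1) := mul_left_comm _ _ _
    _ ≤ 3 ^ n * (2 * 3 ^ n * I univ) := by gcongr
    _ = 2 * 9 ^ n * I univ := by
        rw [show (9 : ℝ≥0∞) = 3 * 3 by norm_num, mul_pow]; ring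

end Packing

section WeakType

open DyadicIndex

variable {n : ℕ} {δ : ℝ}

lemma exists_neighbours_le_outerChoquet {μ : OuterMeasure (En n)} {g : En n → ℝ≥0∞}
    {Q : DyadicIndex n} {s : Set (En n)} (hs : s ⊆ thickening Q.side Q.cube) {a : ℝ≥0∞}
    (ha : 3 ^ n * (a * weight δ Q) ≤ outerChoquet μ s g) :
    ∃ P ∈ Q.neighbours, a * weight δ P ≤ outerChoquet μ (P.cube ∩ s) g := by
  have hcover : s ⊆ ⋃ P ∈ Q.neighbours, P.cube ∩ s := fun y hy => by
    simpa [hy] using Q.thickening_subset_iUnion_neighbours (hs hy)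
  refine ENNReal.exists_le_of_sum_le
    (Finset.card_pos.1 (Q.card_neighbours.symm ▸ by positivity)) ?_
  calc ∑ P ∈ Q.neighbours, a * weight δ P = 3 ^ n * (a * weight δ Q) := by
        rw [Finset.sum_congr rfl fun P hP => by rw [weight_congr (mem_neighbours.1 hP).1],
          Finset.sum_const, card_neighbours, nsmul_eq_mul, Nat.cast_pow, Nat.cast_ofNat]
    _ ≤ outerChoquet μ s g := ha
    _ ≤ ∑ P ∈ Q.neighbours, outerChoquet μ (P.cube ∩ s) g :=
        outerChoquet_le_sum_of_subset_biUnion hcover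

lemma exists_mem_thickening_of_le_outerChoquet_ball {μ : OuterMeasure (En n)} {g : En n → ℝ≥0∞}
    {Q : DyadicIndex n} {x : En n} {r : ℝ} (hx : x ∈ Q.cube) (hr : r ≤ Q.side) {a : ℝ≥0∞}
    (ha0 : a ≠ 0) (ha : 3 ^ n * (a * weight δ Q) ≤ outerChoquet μ (ball x r) g) :
    ∃ P : DyadicIndex n, a * weight δ P ≤ outerChoquet μ P.cube g ∧
      x ∈ thickening P.side P.cube := by
  obtain ⟨P, hP, hle⟩ :=
    exists_neighbours_le_outerChoquet (ball_subset_thickening_cube hx hr) ha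
  obtain ⟨y, hyP, hyx⟩ : (P.cube ∩ ball x r).Nonempty := by
    by_contra! hempty
    rw [hempty, outerChoquet_empty] at hle
    exact mul_ne_zero ha0 weight_ne_zero (nonpos_iff_eq_zero.1 hle)
  refine ⟨P, hle.trans (outerChoquet_mono inter_subset_left fun _ _ => le_rfl),
    mem_thickening_iff.2 ⟨y, hyP, ?_⟩⟩
  have hside : P.side = Q.side := by rw [side, side, (mem_neighbours.1 hP).1]
  rw [hside, dist_comm]
  exact (mem_ball.1 hyx).trans_le hr

lemma superlevel_choquetAverage_subset (hδ : 0 < δ) {K : ℝ≥0∞}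
    (hK : ∀ (Q : DyadicIndex n) (x : En n) (r : ℝ), Q.side ≤ 2 * r →
      weight δ Q ≤ K * dyadicContent n δ (ball x r)) {a q : ℝ≥0∞} (ha : a ≠ 0)
    (haq : 3 ^ n * a * K ≤ q) (g : En n → ℝ≥0∞) :
    {x | ∃ r > 0, q < choquetAverage (dyadicOuterMeasure n hδ) (ball x r) g} ⊆
      ⋃ Q ∈ {Q : DyadicIndex n |
        a * weight δ Q ≤ outerChoquet (dyadicOuterMeasure n hδ) Q.cube g},
          thickening Q.side Q.cube := by
  rintro x ⟨r, hr, hq⟩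
  obtain ⟨Q, hxQ, hrQ, hQr⟩ := exists_mem_cube_side_mem_Icc x hr
  have hball : 3 ^ n * (a * weight δ Q) ≤
      outerChoquet (dyadicOuterMeasure n hδ) (ball x r) g :=
    calc 3 ^ n * (a * weight δ Q) ≤ 3 ^ n * (a * (K * dyadicContent n δ (ball x r))) := by
          gcongr; exact hK Q x r hQr
      _ = 3 ^ n * a * K * dyadicContent n δ (ball x r) := by ring
      _ ≤ q * dyadicContent n δ (ball x r) := by gcongr
      _ ≤ _ := (ENNReal.mul_lt_of_lt_div hq).le
  simpa only [mem_iUnion₂, mem_ofPred_eq, exists_prop] using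
    exists_mem_thickening_of_le_outerChoquet_ball hxQ hrQ ha hball

theorem weakTypeMaximal_dyadicOuterMeasure (hδ : 0 < δ) (hδn : δ ≤ n) :
    ∃ C ≠ ⊤, WeakTypeMaximal (dyadicOuterMeasure n hδ) C := by
  obtain ⟨K, hK, hweight⟩ := exists_weight_le_mul_dyadicContent_ball hδ hδn
  obtain ⟨D, hD, hDK⟩ : ∃ D : ℝ≥0, D ≠ 0 ∧ D = 3 ^ n * K := ⟨_, by positivity, rfl⟩
  refine ⟨D * (2 * 9 ^ n), by finiteness, fun g q => ?_⟩
  rcases eq_or_ne q 0 with rfl | hq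
  · simp
  rcases eq_or_ne (outerChoquet (dyadicOuterMeasure n hδ) univ g) ⊤ with hg | hg
  · simp [hg, ENNReal.mul_top, hD]
  have hqD : 3 ^ n * ((q / D : ℝ≥0) : ℝ≥0∞) * K = q := by
    norm_cast
    rw [mul_right_comm, Nat.cast_pow, Nat.cast_ofNat, ← hDK, mul_div_cancel₀ _ hD]
  set E := {x | ∃ r > 0, q < choquetAverage (dyadicOuterMeasure n hδ) (ball x r) g}
  have hE : (q / D : ℝ≥0) * dyadicContent n δ E ≤
      2 * 9 ^ n * outerChoquet (dyadicOuterMeasure n hδ) univ g := by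
    refine le_trans ?_ (mul_dyadicContent_iUnion_thickening_le hδ g (div_ne_zero hq hD) hg)
    gcongr
    exact dyadicContent_mono
      (superlevel_choquetAverage_subset hδ hweight (by simp [hq, hD]) hqD.le g)
  calc q * dyadicContent n δ E = D * ((q / D : ℝ≥0) * dyadicContent n δ E) := by
        rw [← mul_assoc, ← ENNReal.coe_mul, mul_div_cancel₀ _ hD]
    _ ≤ D * (2 * 9 ^ n * outerChoquet (dyadicOuterMeasure n hδ) univ g) := by gcongr
    _ = _ := (mul_assoc _ _ _).symm

end WeakType

theorem limsup_avg_eq_of_nL1_limit_general {n : ℕ} {δ : ℝ} (hδ0 : 0 < δ) (hδn : δ ≤ n)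
    {f : En n → ℝ}
    (hlimit : ∃ φ : ℕ → En n → ℝ, (∀ i, Continuous (φ i)) ∧
      Tendsto (fun i => choquetIntegralAbs n δ univ (fun x => f x - φ i x))
        atTop (𝓝 0)) :
    ∃ E : Set (En n), dyadicContent n δ E = 0 ∧ ∀ x ∉ E,
      Tendsto (fun r => ballAvg n δ (fun y => ENNReal.ofReal |f y|) x r) (𝓝[>] 0)
        (𝓝 (ENNReal.ofReal |f x|)) := by
  obtain ⟨φ, hφ, hlim⟩ := hlimit
  obtain ⟨C, hC, hweak⟩ := weakTypeMaximal_dyadicOuterMeasure hδ0 hδn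
  simp only [← Real.enorm_eq_ofReal_abs, choquetIntegralAbs] at hlim ⊢
  have hae := ae_tendsto_choquetAverage_enorm_sub hweak hC hφ hlim
  exact ⟨_, hae, fun x hx => tendsto_choquetAverage_enorm
    (fun r hr => dyadicContent_ball_ne_zero hδ0 hδn x hr) (dyadicContent_ball_ne_top hδ0 x)
    (not_not.1 hx)⟩

/-- if a nonnegative `f ∈ nL¹(ℝⁿ, H̃^δ_∞)` is an `nL¹`-limit of continuous
functions, then `f(x) = limsup_{r→0⁺} f^δ_{B(x,r)}` for `H̃^δ_∞`-almost every `x`. -/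
theorem limsup_avg_eq_of_nL1_limit (n : ℕ) (hn : 1 ≤ n)
    (δ : ℝ) (hδ0 : 0 < δ) (hδn : δ ≤ n)
    (f : En n → ℝ) (hpos : ∀ x, 0 ≤ f x)
    (hf : choquetIntegralAbs n δ univ f < ⊤)
    (hlimit : ∃ φ : ℕ → En n → ℝ, (∀ i, Continuous (φ i)) ∧
      Tendsto (fun i => choquetIntegralAbs n δ univ (fun x => f x - φ i x))
        atTop (𝓝 0)) :
    ∃ E : Set (En n), dyadicContent n δ E = 0 ∧
      ∀ x ∉ E, ENNReal.ofReal (f x) =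
        limsupAvg n δ (fun y => ENNReal.ofReal (f y)) x := by
  obtain ⟨E, hE, htendsto⟩ := limsup_avg_eq_of_nL1_limit_general hδ0 hδn hlimit
  simp only [abs_of_nonneg (hpos _)] at htendsto
  exact ⟨E, hE, fun x hx => (htendsto x hx).limsup_eq.symm⟩
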